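/- Let n be an arbitrary positive integer and let G be a graph on n vertices with ρ(G) > ρ(T_{n,2}). Then for every integer t with 3 ≤ t ≤ n/7, the graph G contains a cycle C_t of length t. -/

import Mathlib

open SimpleGraph Finset

attribute [local instance] Classical.propDecidable

/-- The spectral radius (largest adjacency eigenvalue) of a graph on `Fin n`. -/
noncomputable def adjSpectralRadius {n : ℕ} (G : SimpleGraph (Fin n)) : ℝ :=
  sSup (spectrum ℝ (G.adjMatrix ℝ))

/-- `G` contains a copy of `H` (a subgraph isomorphic to `H`). -/
def Contains {α β : Type*} (G : SimpleGraph α) (H : SimpleGraph β) : Prop :=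
  ∃ f : β ↪ α, ∀ a b, H.Adj a b → G.Adj (f a) (f b)

/-- The book `B_s`: `s` triangles sharing a common edge, i.e. `K_{2,s}` plus the
edge inside the part of size two. -/
def book (s : ℕ) : SimpleGraph (Fin 2 ⊕ Fin s) :=
  SimpleGraph.fromRel (fun x _ => x.isLeft = true)

/-- The theta graph `θ_{r+1} = θ(1,2,r+1)`: vertices `0,…,r+1` form a path of length
`r+1`, the edge `0 ~ (r+1)`, and vertex `r+2` is adjacent to `0` and `r+1`. -/
def theta (r : ℕ) : SimpleGraph (Fin (r + 3)) :=
  SimpleGraph.fromRel (fun x y =>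
    (x.val + 1 = y.val ∧ y.val ≤ r + 1) ∨
    (x.val = 0 ∧ y.val = r + 1) ∨
    (x.val = r + 2 ∧ (y.val = 0 ∨ y.val = r + 1)))

/-- The number of edges of a graph. -/
noncomputable def edgeCount {V : Type*} (G : SimpleGraph V) : ℕ := G.edgeSet.ncard

/-- The number of ordered pairs `(a,b) ∈ s × t` with `a ~ b`.  For disjoint `s` and `t`
this is the number `e(s,t)` of edges between `s` and `t`; for `s = t` it is `2·e(s)`. -/
noncomputable def ordPairs {V : Type*} (G : SimpleGraph V) (s t : Finset V) : ℕ :=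
  ((s ×ˢ t).filter fun p => G.Adj p.1 p.2).card

/-- The number of edges inside a vertex subset `s`. -/
noncomputable def edgesIn {V : Type*} (G : SimpleGraph V) (s : Finset V) : ℕ :=
  (G.induce (s : Set V)).edgeSet.ncard

/-!
Let `μ = ρ(G)` and let `u` be a vertex where a `μ`-eigenvector has its largest absolute value. Then
`μ ^ 2 ≤ ∑ v ∈ N(u), deg v`, and since `ρ(T_{n,2}) ^ 2 ≥ ⌊n ^ 2 / 4⌋` the sum exceeds `n ^ 2 / 4`.
With `A = N(u)` and `B` the set of non-neighbours of `u`, the sum is `|A| + 2 e(A) + e(A, B)`.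

A path with `t - 1` vertices inside `A` closes up through `u` to a `C_t`, so the Erdős–Gallai
theorem gives `2 e(A) ≤ (t - 3) |A|`. Deleting from `(A, B)` vertices of degree below about `t / 2`
leaves a core `(A₀, B₀)`. If `t` is even, a path alternating between the two sides of a nonempty
core closes up through `u` to a `C_t`. If `t` is odd, the same works once the path is prolonged by
an edge `sv` of `A` such that `s` has a neighbour in `B₀`; hence either the core is empty or no edge
of `A` meets the set of such `s`. In each case there are too few edges for the sum to exceed
`n ^ 2 / 4` when `7 t ≤ n`.
-/

section Spectral

variable {V : Type*} [Fintype V] [DecidableEq V] {G : SimpleGraph V} {μ : ℝ}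

/-- For an eigenvector `x`, comparing `μ ^ 2 * x u = ∑ v ∈ N(u), ∑ w ∈ N(v), x w` with the
largest `|x u|`. -/
lemma exists_sq_le_sum_degree_of_mem_spectrum (hμ : μ ∈ spectrum ℝ (G.adjMatrix ℝ)) :
    ∃ u, μ ^ 2 ≤ ∑ v ∈ G.neighborFinset u, (G.degree v : ℝ) := by
  rw [← Matrix.spectrum_toLin', ← Module.End.hasEigenvalue_iff_mem_spectrum] at hμ
  obtain ⟨x, hx⟩ := hμ.exists_hasEigenvector
  have hsum : ∀ v, ∑ w ∈ G.neighborFinset v, x w = μ * x v := fun v ↦ by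
    simpa [adjMatrix_mulVec_apply] using congrFun hx.apply_eq_smul v
  obtain ⟨v₀, hv₀⟩ := Function.ne_iff.mp hx.2
  obtain ⟨u, -, hu⟩ := exists_max_image univ (fun v ↦ |x v|) ⟨v₀, mem_univ v₀⟩
  have hpos : 0 < |x u| := (abs_pos.mpr hv₀).trans_le (hu v₀ (mem_univ v₀))
  refine ⟨u, le_of_mul_le_mul_right ?_ hpos⟩
  calc μ ^ 2 * |x u| = |μ ^ 2 * x u| := by rw [abs_mul, abs_sq]
    _ = |∑ v ∈ G.neighborFinset u, ∑ w ∈ G.neighborFinset v, x w| := by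
      rw [sum_congr rfl fun v _ ↦ hsum v, ← mul_sum, hsum, sq, mul_assoc]
    _ ≤ ∑ v ∈ G.neighborFinset u, ∑ w ∈ G.neighborFinset v, |x w| :=
      (abs_sum_le_sum_abs _ _).trans (sum_le_sum fun v _ ↦ abs_sum_le_sum_abs _ _)
    _ ≤ ∑ v ∈ G.neighborFinset u, G.degree v * |x u| := sum_le_sum fun v _ ↦ by
      rw [← nsmul_eq_mul, ← card_neighborFinset_eq_degree]
      exact sum_le_card_nsmul _ _ _ fun w _ ↦ hu w (mem_univ w)
    _ = (∑ v ∈ G.neighborFinset u, (G.degree v : ℝ)) * |x u| := (sum_mul _ _ _).symm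

lemma sqrt_card_mul_card_compl_mem_spectrum {S : Finset V} (hS : S.Nonempty)
    (hSc : Sᶜ.Nonempty) (h : ∀ v w, G.Adj v w ↔ (v ∈ S ↔ w ∉ S)) :
    √(#S * #Sᶜ) ∈ spectrum ℝ (G.adjMatrix ℝ) := by
  rw [← Matrix.spectrum_toLin', ← Module.End.hasEigenvalue_iff_mem_spectrum]
  let x : V → ℝ := fun v ↦ if v ∈ S then √(#Sᶜ) else √(#S)
  refine Module.End.hasEigenvalue_of_hasEigenvector (x := x)
    (Module.End.hasEigenvector_iff.mpr ⟨Module.End.mem_eigenspace_iff.mpr (funext fun v ↦ ?_), ?_⟩)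
  · rw [Matrix.toLin'_apply, adjMatrix_mulVec_apply, Pi.smul_apply, smul_eq_mul,
      Real.sqrt_mul (Nat.cast_nonneg _)]
    by_cases hv : v ∈ S
    · have hN : G.neighborFinset v = Sᶜ := by
        ext w
        simp [h, hv]
      rw [hN, sum_congr rfl fun w hw ↦ if_neg (mem_compl.mp hw), sum_const, nsmul_eq_mul]
      simp only [x, if_pos hv]
      rw [mul_assoc, Real.mul_self_sqrt (Nat.cast_nonneg _), mul_comm]
    · have hN : G.neighborFinset v = S := by
        ext w
        simp [h, hv]
      rw [hN, sum_congr rfl fun w hw ↦ if_pos hw, sum_const, nsmul_eq_mul]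
      simp only [x, if_neg hv]
      rw [mul_right_comm, Real.mul_self_sqrt (Nat.cast_nonneg _)]
  · obtain ⟨v, hv⟩ := hS
    refine Function.ne_iff.mpr ⟨v, ?_⟩
    simpa [x, hv] using hSc.ne_empty

end Spectral

section SpectralRadius

variable {n : ℕ}

lemma le_adjSpectralRadius {G : SimpleGraph (Fin n)} {μ : ℝ}
    (hμ : μ ∈ spectrum ℝ (G.adjMatrix ℝ)) : μ ≤ adjSpectralRadius G :=
  le_csSup Matrix.finite_real_spectrum.bddAbove hμ

lemma exists_mem_spectrum_of_lt_adjSpectralRadius {G : SimpleGraph (Fin n)} {r : ℝ} (hr : 0 ≤ r)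
    (h : r < adjSpectralRadius G) : ∃ μ ∈ spectrum ℝ (G.adjMatrix ℝ), r < μ := by
  refine exists_lt_of_lt_csSup (Set.nonempty_iff_ne_empty.mpr fun hempty ↦ ?_) h
  rw [adjSpectralRadius, hempty, Real.sSup_empty] at h
  exact h.not_ge hr

lemma card_filter_two_dvd_val_add_one (n : ℕ) : #{v : Fin n | 2 ∣ v.val + 1} = n / 2 := by
  rw [← Nat.card_multiples n 2, card_filter, card_filter,
    Fin.sum_univ_eq_sum_range (fun i ↦ if 2 ∣ i + 1 then 1 else 0)]

lemma sq_div_four (n : ℕ) : n ^ 2 / 4 = n / 2 * ((n + 1) / 2) := by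
  obtain ⟨c, rfl | rfl⟩ := n.even_or_odd'
  · rw [show 2 * c / 2 = c by omega, show (2 * c + 1) / 2 = c by omega,
      show (2 * c) ^ 2 = 4 * (c * c) by ring]
    omega
  · rw [show (2 * c + 1) / 2 = c by omega, show (2 * c + 1 + 1) / 2 = c + 1 by omega,
      show (2 * c + 1) ^ 2 = 4 * (c * (c + 1)) + 1 by ring]
    omega

lemma sqrt_le_adjSpectralRadius_turanGraph (hn : 2 ≤ n) :
    √(n ^ 2 / 4 : ℕ) ≤ adjSpectralRadius (turanGraph n 2) := by
  let S : Finset (Fin n) := {v | 2 ∣ v.val + 1}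
  have hS : #S = n / 2 := card_filter_two_dvd_val_add_one n
  have hSc : #Sᶜ = (n + 1) / 2 := by
    rw [card_compl, hS, Fintype.card_fin]
    omega
  have hSne : S.Nonempty := card_pos.mp (by omega)
  have hScne : Sᶜ.Nonempty := card_pos.mp (by omega)
  have hadj : ∀ v w, (turanGraph n 2).Adj v w ↔ (v ∈ S ↔ w ∉ S) := fun v w ↦ by
    simp only [turanGraph_adj, S, mem_filter_univ]
    omega
  rw [sq_div_four, ← hS, ← hSc, Nat.cast_mul]
  exact le_adjSpectralRadius (sqrt_card_mul_card_compl_mem_spectrum hSne hScne hadj)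

lemma exists_sq_lt_four_mul_sum_degree {G : SimpleGraph (Fin n)} (hn : 2 ≤ n)
    (h : adjSpectralRadius (turanGraph n 2) < adjSpectralRadius G) :
    ∃ u, n ^ 2 < 4 * ∑ v ∈ G.neighborFinset u, G.degree v := by
  obtain ⟨μ, hμ, hlt⟩ := exists_mem_spectrum_of_lt_adjSpectralRadius (Real.sqrt_nonneg _)
    ((sqrt_le_adjSpectralRadius_turanGraph hn).trans_lt h)
  obtain ⟨u, hu⟩ := exists_sq_le_sum_degree_of_mem_spectrum hμ
  have hsum : n ^ 2 / 4 < ∑ v ∈ G.neighborFinset u, G.degree v := by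
    exact_mod_cast (Real.lt_sq_of_sqrt_lt hlt).trans_le hu
  exact ⟨u, by omega⟩

end SpectralRadius

section Counting

variable {V : Type*} (G : SimpleGraph V)

/-- The number of neighbours of `v` in the finite set `T`. -/
noncomputable def degreeIn (v : V) (T : Finset V) : ℕ := #{w ∈ T | G.Adj v w}

lemma degreeIn_le_card (v : V) (T : Finset V) : degreeIn G v T ≤ #T :=
  card_filter_le _ _

lemma degreeIn_lt_card {v : V} {T : Finset V} (hv : v ∈ T) : degreeIn G v T < #T :=
  card_lt_card <| filter_ssubset.mpr ⟨v, hv, G.loopless.irrefl v⟩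

lemma degreeIn_union (v : V) {S T : Finset V} (h : Disjoint S T) :
    degreeIn G v (S ∪ T) = degreeIn G v S + degreeIn G v T := by
  rw [degreeIn, filter_union, card_union_of_disjoint (disjoint_filter_filter h), degreeIn, degreeIn]

lemma degreeIn_univ [Fintype V] (v : V) : degreeIn G v univ = G.degree v := by
  rw [degreeIn, ← neighborFinset_eq_filter, card_neighborFinset_eq_degree]

variable {G} in
lemma exists_adj_of_degreeIn_pos {v : V} {T : Finset V} (h : 0 < degreeIn G v T) :
    ∃ w ∈ T, G.Adj v w := by
  obtain ⟨w, hw⟩ := card_pos.mp h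
  exact ⟨w, mem_filter.mp hw⟩

variable {G} in
lemma exists_adj_notMem_of_card_inter_lt {v : V} {T F : Finset V}
    (h : #(T ∩ F) < degreeIn G v T) : ∃ w ∈ T, G.Adj v w ∧ w ∉ F := by
  obtain ⟨w, hw, hwF⟩ := exists_mem_notMem_of_card_lt_card h
  rw [mem_filter] at hw
  exact ⟨w, hw.1, hw.2, fun h ↦ hwF (mem_inter.mpr ⟨hw.1, h⟩)⟩

lemma ordPairs_eq_sum_degreeIn (S T : Finset V) : ordPairs G S T = ∑ v ∈ S, degreeIn G v T := by
  simp only [ordPairs, degreeIn, card_filter, sum_product]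

lemma ordPairs_comm (S T : Finset V) : ordPairs G S T = ordPairs G T S := by
  simp only [ordPairs, card_filter, sum_product_right (s := S), sum_product (s := T), G.adj_comm]

lemma ordPairs_le_card_mul {S T : Finset V} {c : ℕ} (h : ∀ v ∈ S, degreeIn G v T ≤ c) :
    ordPairs G S T ≤ #S * c := by
  rw [ordPairs_eq_sum_degreeIn]
  exact sum_le_card_nsmul _ _ _ h

lemma ordPairs_union_left {S S' : Finset V} (h : Disjoint S S') (T : Finset V) :
    ordPairs G (S ∪ S') T = ordPairs G S T + ordPairs G S' T := by
  simp only [ordPairs_eq_sum_degreeIn, sum_union h]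

lemma ordPairs_union_right (S : Finset V) {T T' : Finset V} (h : Disjoint T T') :
    ordPairs G S (T ∪ T') = ordPairs G S T + ordPairs G S T' := by
  simp only [ordPairs_eq_sum_degreeIn, degreeIn_union G _ h, sum_add_distrib]

lemma ordPairs_erase_left {S : Finset V} {v : V} (hv : v ∈ S) (T : Finset V) :
    ordPairs G (S.erase v) T + degreeIn G v T = ordPairs G S T := by
  simp only [ordPairs_eq_sum_degreeIn, sum_erase_add _ _ hv]

lemma ordPairs_self_eq_of_subset {S T : Finset V} (h : T ⊆ S) :
    ordPairs G S S = ordPairs G T T + 2 * ordPairs G T (S \ T) + ordPairs G (S \ T) (S \ T) := by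
  have hdisj : Disjoint T (S \ T) := disjoint_sdiff
  conv_lhs => rw [← union_sdiff_of_subset h]
  rw [ordPairs_union_left G hdisj, ordPairs_union_right G _ hdisj, ordPairs_union_right G _ hdisj,
    ordPairs_comm G (S \ T) T]
  ring

end Counting

section Core

variable {V : Type*} {G : SimpleGraph V} {k : ℕ}

/-- Disjoint sets `A` and `B` such that every vertex of `A` has at least `k` neighbours in `B` and
every vertex of `B` has more than `k` neighbours in `A`: what is left of a pair of disjoint sets
after repeatedly deleting vertices of low degree into the opposite side. -/
structure IsCorePair (G : SimpleGraph V) (k : ℕ) (A B : Finset V) : Prop where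
  disjoint : Disjoint A B
  le_degreeIn_right : ∀ a ∈ A, k ≤ degreeIn G a B
  lt_degreeIn_left : ∀ b ∈ B, k < degreeIn G b A

/-- Each deleted vertex destroys at most `k` edges, which gives the lower bound on the number of
edges that survive. -/
lemma exists_isCorePair (G : SimpleGraph V) (k : ℕ) {A B : Finset V} (h : Disjoint A B) :
    ∃ A₀ ⊆ A, ∃ B₀ ⊆ B, IsCorePair G k A₀ B₀ ∧
      ordPairs G A B + k * (#A₀ + #B₀) ≤ ordPairs G A₀ B₀ + k * (#A + #B) := by
  by_cases hA : ∃ a ∈ A, degreeIn G a B < k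
  · obtain ⟨a, ha, hlt⟩ := hA
    obtain ⟨A₀, hA₀, B₀, hB₀, hcore, hle⟩ :=
      exists_isCorePair G k (disjoint_of_subset_left (erase_subset a A) h)
    refine ⟨A₀, hA₀.trans (erase_subset a A), B₀, hB₀, hcore, ?_⟩
    have := ordPairs_erase_left G ha B
    rw [← card_erase_add_one ha]
    linarith
  by_cases hB : ∃ b ∈ B, degreeIn G b A ≤ k
  · obtain ⟨b, hb, hle⟩ := hB
    obtain ⟨A₀, hA₀, B₀, hB₀, hcore, hle⟩ :=
      exists_isCorePair G k (disjoint_of_subset_right (erase_subset b B) h)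
    refine ⟨A₀, hA₀, B₀, hB₀.trans (erase_subset b B), hcore, ?_⟩
    have := ordPairs_erase_left G hb A
    rw [ordPairs_comm, ordPairs_comm G B] at this
    rw [← card_erase_add_one hb]
    linarith
  push Not at hA hB
  exact ⟨A, subset_rfl, B, subset_rfl, ⟨h, hA, hB⟩, le_rfl⟩
termination_by #A + #B
decreasing_by
  · have := card_erase_lt_of_mem ha
    omega
  · have := card_erase_lt_of_mem hb
    omega

lemma ordPairs_le_of_core_empty {A B B₀ : Finset V}
    (h : ordPairs G A B + k * (#(∅ : Finset V) + #B₀) ≤ ordPairs G ∅ B₀ + k * (#A + #B)) :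
    ordPairs G A B ≤ k * (#A + #B) := by
  simp only [ordPairs, empty_product, filter_empty, card_empty, zero_add] at h
  exact le_of_add_le_left h

namespace IsCorePair

/-- A step goes from `A` to a new vertex of `B` and back to a new vertex of `A`, so it uses up one
vertex of each side. -/
lemma exists_isPath_extend {A B : Finset V} (h : IsCorePair G k A B) {v : V} (j : ℕ) {a : V}
    (ha : a ∈ A) (p : G.Walk a v) (hp : p.IsPath) (hA : #(A ∩ p.support.toFinset) + j ≤ k + 1)
    (hB : #(B ∩ p.support.toFinset) + j ≤ k) :
    ∃ a' ∈ A, ∃ q : G.Walk a' v, q.IsPath ∧ q.length = p.length + 2 * j ∧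
      ∀ w ∈ q.support, w ∈ p.support ∨ w ∈ A ∨ w ∈ B := by
  induction j generalizing a with
  | zero => exact ⟨a, ha, p, hp, rfl, fun w hw ↦ .inl hw⟩
  | succ j ih =>
    obtain ⟨b, hb, hab, hbp⟩ : ∃ b ∈ B, G.Adj a b ∧ b ∉ p.support.toFinset :=
      exists_adj_notMem_of_card_inter_lt <|
        (show _ < k by omega).trans_le (h.le_degreeIn_right a ha)
    obtain ⟨c, hc, hbc, hcp⟩ : ∃ c ∈ A, G.Adj b c ∧ c ∉ p.support.toFinset :=
      exists_adj_notMem_of_card_inter_lt <|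
        (show _ ≤ k by omega).trans_lt (h.lt_degreeIn_left b hb)
    have hbA : b ∉ A := fun hbA ↦ disjoint_left.mp h.disjoint hbA hb
    have hcB : c ∉ B := disjoint_left.mp h.disjoint hc
    rw [List.mem_toFinset] at hbp hcp
    let q := Walk.cons hbc.symm (.cons hab.symm p)
    have hq : q.IsPath := by
      simp [q, Walk.cons_isPath_iff, hp, hbp, hcp, hbc.ne']
    have hqsupp : q.support.toFinset = insert c (insert b p.support.toFinset) := by
      simp [q]
    obtain ⟨a', ha', r, hr, hlen, hsupp⟩ := ih hc q hq
      (by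
        rw [hqsupp, inter_insert_of_mem hc, inter_insert_of_notMem hbA]
        have := card_insert_le c (A ∩ p.support.toFinset)
        omega)
      (by
        rw [hqsupp, inter_insert_of_notMem hcB, inter_insert_of_mem hb]
        have := card_insert_le b (B ∩ p.support.toFinset)
        omega)
    refine ⟨a', ha', r, hr, ?_, fun w hw ↦ ?_⟩
    · simp only [hlen, q, Walk.length_cons]
      ring
    · rcases hsupp w hw with hw | hw
      · simp only [q, Walk.support_cons, List.mem_cons] at hw
        rcases hw with rfl | rfl | hw
        exacts [.inr (.inl hc), .inr (.inr hb), .inl hw]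
      · exact .inr hw

end IsCorePair

end Core

section LongPaths

variable {V : Type*} {G : SimpleGraph V} {S : Finset V} {x y : V}

/-- A path of `G` all of whose vertices belong to `S`; kept as a walk of `G` rather than of
`G.induce S`, so that it can be extended by vertices outside `S`. -/
structure IsPathIn (S : Finset V) (p : G.Walk x y) : Prop where
  isPath : p.IsPath
  mem : ∀ v ∈ p.support, v ∈ S

/-- A path of maximal length among all paths of `G`, with arbitrary endpoints, inside `S`: the
extremal object of the Erdős–Gallai argument. -/
structure IsLongestPathIn (S : Finset V) (p : G.Walk x y) : Prop extends IsPathIn S p where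
  length_le : ∀ {x' y' : V} (q : G.Walk x' y'), IsPathIn S q → q.length ≤ p.length

lemma IsPathIn.length_lt_card {p : G.Walk x y} (hp : IsPathIn S p) : p.length < #S := by
  rw [← Nat.add_one_le_iff, ← p.length_support,
    ← List.toFinset_card_of_nodup hp.isPath.support_nodup]
  exact card_le_card fun v hv ↦ hp.mem v (List.mem_toFinset.mp hv)

lemma IsPathIn.reverse {p : G.Walk x y} (hp : IsPathIn S p) : IsPathIn S p.reverse :=
  ⟨hp.isPath.reverse, fun v hv ↦ hp.mem v (by simpa using hv)⟩

lemma exists_isLongestPathIn (G : SimpleGraph V) (hS : S.Nonempty) :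
    ∃ (x y : V) (p : G.Walk x y), IsLongestPathIn S p := by
  obtain ⟨v, hv⟩ := hS
  let P : ℕ → Prop := fun m ↦ ∃ (x y : V) (p : G.Walk x y), IsPathIn S p ∧ p.length = m
  have hP : P 0 := ⟨v, v, .nil, ⟨.nil, by simpa using hv⟩, rfl⟩
  obtain ⟨x, y, p, hp, hlen⟩ := Nat.findGreatest_spec (Nat.zero_le #S) hP
  exact ⟨x, y, p, hp, fun q hq ↦
    hlen ▸ Nat.le_findGreatest hq.length_lt_card.le ⟨_, _, q, hq, rfl⟩⟩

namespace IsLongestPathIn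

variable {p : G.Walk x y}

lemma reverse (hp : IsLongestPathIn S p) : IsLongestPathIn S p.reverse :=
  ⟨hp.toIsPathIn.reverse, fun q hq ↦ p.length_reverse ▸ hp.length_le q hq⟩

lemma mem_support_of_adj_left (hp : IsLongestPathIn S p) {w : V} (hw : w ∈ S) (h : G.Adj x w) :
    w ∈ p.support := by
  by_contra hwp
  have := hp.length_le (.cons h.symm p) ⟨hp.isPath.cons hwp, by simpa [hw] using hp.mem⟩
  simp at this

lemma mem_support_of_adj_right (hp : IsLongestPathIn S p) {w : V} (hw : w ∈ S) (h : G.Adj y w) :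
    w ∈ p.support := by
  simpa using hp.reverse.mem_support_of_adj_left hw h

end IsLongestPathIn

/-- The indices of the predecessors on `p` of the neighbours of `x`, and those of the neighbours
of `y`, are too many to be disjoint subsets of `{0, …, p.length - 1}`. -/
lemma exists_adj_getVert_of_length_lt (p : G.Walk x y)
    (hx : ∀ w ∈ S, G.Adj x w → w ∈ p.support) (hy : ∀ w ∈ S, G.Adj y w → w ∈ p.support)
    (h : p.length < degreeIn G x S + degreeIn G y S) :
    ∃ i < p.length, G.Adj x (p.getVert (i + 1)) ∧ G.Adj y (p.getVert i) := by
  let I := {i ∈ range p.length | G.Adj x (p.getVert (i + 1))}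
  let J := {i ∈ range p.length | G.Adj y (p.getVert i)}
  have hI : degreeIn G x S ≤ #I := by
    refine (card_le_card fun w hw ↦ ?_).trans (card_image_le (f := fun i ↦ p.getVert (i + 1)))
    obtain ⟨hwS, hxw⟩ := mem_filter.mp hw
    obtain ⟨m, rfl, hm⟩ := Walk.mem_support_iff_exists_getVert.mp (hx w hwS hxw)
    obtain _ | i := m
    · simp at hxw
    · exact mem_image.mpr ⟨i, by simpa [I, hxw] using hm, rfl⟩
  have hJ : degreeIn G y S ≤ #J := by
    refine (card_le_card fun w hw ↦ ?_).trans (card_image_le (f := p.getVert))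
    obtain ⟨hwS, hyw⟩ := mem_filter.mp hw
    obtain ⟨i, rfl, hi⟩ := Walk.mem_support_iff_exists_getVert.mp (hy w hwS hyw)
    have : i ≠ p.length := by
      rintro rfl
      simp at hyw
    exact mem_image.mpr ⟨i, by simpa [J, hyw] using hi.lt_of_ne this, rfl⟩
  obtain ⟨i, hi⟩ := inter_nonempty_of_card_lt_card_add_card (filter_subset _ _) (filter_subset _ _)
    ((card_range p.length).trans_lt (h.trans_le (add_le_add hI hJ)))
  simp only [mem_inter, mem_filter, mem_range] at hi
  exact ⟨i, hi.1.1, hi.1.2, hi.2.2⟩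

lemma exists_closedWalk_support_tail_perm (p : G.Walk x y) {i : ℕ} (hi : i < p.length)
    (hx : G.Adj x (p.getVert (i + 1))) (hy : G.Adj y (p.getVert i)) :
    ∃ c : G.Walk y y, c.support.tail.Perm p.support := by
  refine ⟨.cons hy ((p.take i).reverse.append (.cons hx (p.drop (i + 1)))), ?_⟩
  have hsplit : (p.take i).support ++ (p.drop (i + 1)).support = p.support := by
    rw [Walk.support_take, Walk.drop_support_eq_support_drop_min, min_eq_left hi,
      List.take_append_drop]
  rw [Walk.support_cons, List.tail_cons, Walk.support_append, Walk.support_cons, List.tail_cons,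
    Walk.support_reverse, ← hsplit]
  exact (List.reverse_perm _).append_right _

lemma exists_isPath_cons_of_closedWalk {u z w : V} (c : G.Walk u u) (hc : c.support.tail.Nodup)
    (hnil : ¬c.Nil) (hz : z ∈ c.support) (hw : w ∉ c.support.tail) (h : G.Adj w z) :
    ∃ (v : V) (q : G.Walk w v), q.IsPath ∧ q.support.Perm (w :: c.support.tail) := by
  let d := c.rotate z hz
  have hd : ¬d.Nil := by rwa [Walk.nil_rotate]
  have hperm : (Walk.cons h d.dropLast).support.Perm (w :: c.support.tail) := by
    rw [Walk.support_cons, Walk.support_dropLast hd, List.perm_cons]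
    exact d.tail_support_perm_dropLast_support.symm.trans (c.support_rotate z hz).perm
  exact ⟨_, _, .mk' (hperm.nodup_iff.mpr (List.nodup_cons.mpr ⟨hw, hc⟩)), hperm⟩

/-- Closing the path up to a cycle, a vertex outside adjacent to the cycle would give a longer
path. -/
lemma IsLongestPathIn.mem_support_of_adj {p : G.Walk x y} (hp : IsLongestPathIn S p)
    (h : p.length < degreeIn G x S + degreeIn G y S) {z w : V} (hz : z ∈ p.support) (hw : w ∈ S)
    (hzw : G.Adj z w) : w ∈ p.support := by
  obtain ⟨i, hi, hx, hy⟩ := exists_adj_getVert_of_length_lt p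
    (fun _ ↦ hp.mem_support_of_adj_left) (fun _ ↦ hp.mem_support_of_adj_right) h
  obtain ⟨c, hc⟩ := exists_closedWalk_support_tail_perm p hi hx hy
  by_contra hwp
  have hnil : ¬c.Nil := fun hnil ↦ by
    have := hc.length_eq
    simp [Walk.nil_iff_support_eq.mp hnil] at this
  obtain ⟨v, q, hq, hqsupp⟩ := exists_isPath_cons_of_closedWalk c
    (hc.nodup_iff.mpr hp.isPath.support_nodup) hnil (List.mem_of_mem_tail (hc.mem_iff.mpr hz))
    (hwp ∘ hc.mem_iff.mp) hzw.symm
  replace hqsupp := hqsupp.trans (hc.cons w)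
  have hlen := hp.length_le q ⟨hq, fun v hv ↦ by
    rcases List.mem_cons.mp (hqsupp.mem_iff.mp hv) with rfl | hv
    exacts [hw, hp.mem v hv]⟩
  have := hqsupp.length_eq
  simp only [Walk.length_support, List.length_cons] at this
  omega

/-- Either `T` is a single vertex of degree at most `k / 2`, or it is the vertex set of a longest
path, which in the absence of such vertices is a union of components. -/
lemma exists_subset_ordPairs_le (G : SimpleGraph V) {k : ℕ} (hS : S.Nonempty)
    (h : ∀ (x y : V) (p : G.Walk x y), IsPathIn S p → p.length ≤ k) :
    ∃ T ⊆ S, T.Nonempty ∧ ordPairs G T T + 2 * ordPairs G T (S \ T) ≤ k * #T := by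
  by_cases hlow : ∃ v ∈ S, 2 * degreeIn G v S ≤ k
  · obtain ⟨v, hv, hdeg⟩ := hlow
    refine ⟨{v}, by simpa using hv, singleton_nonempty v, ?_⟩
    have h₀ := degreeIn_lt_card G (mem_singleton_self v)
    have hunion := degreeIn_union G v (disjoint_sdiff (s := {v}) (t := S))
    rw [union_sdiff_of_subset (by simpa using hv)] at hunion
    simp only [ordPairs_eq_sum_degreeIn, sum_singleton, card_singleton] at h₀ ⊢
    omega
  · push Not at hlow
    obtain ⟨x, y, p, hp⟩ := exists_isLongestPathIn G hS
    have hpk := h x y p hp.toIsPathIn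
    have hx := hlow x (hp.mem x p.start_mem_support)
    have hy := hlow y (hp.mem y p.end_mem_support)
    refine ⟨p.support.toFinset, fun v hv ↦ hp.mem v (List.mem_toFinset.mp hv),
      ⟨x, by simp⟩, ?_⟩
    have hout : ordPairs G p.support.toFinset (S \ p.support.toFinset) = 0 := by
      refine card_eq_zero.mpr (filter_eq_empty_iff.mpr fun ⟨z, w⟩ hzw hadj ↦ ?_)
      simp only [mem_product, mem_sdiff, List.mem_toFinset] at hzw
      exact hzw.2.2 (hp.mem_support_of_adj (by omega) hzw.1 hzw.2.1 hadj)
    have hcard : #p.support.toFinset = p.length + 1 := by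
      rw [List.toFinset_card_of_nodup hp.isPath.support_nodup, p.length_support]
    rw [hout, mul_zero, add_zero, mul_comm]
    refine ordPairs_le_card_mul G fun v hv ↦ ?_
    have := degreeIn_lt_card G hv
    omega

/-- The Erdős–Gallai theorem, with paths confined to `S`. -/
theorem ordPairs_self_le_of_forall_length_le (G : SimpleGraph V) {k : ℕ} (S : Finset V)
    (h : ∀ (x y : V) (p : G.Walk x y), IsPathIn S p → p.length ≤ k) :
    ordPairs G S S ≤ k * #S := by
  induction S using Finset.strongInduction with
  | H S ih =>
    rcases S.eq_empty_or_nonempty with rfl | hS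
    · simp [ordPairs]
    obtain ⟨T, hTS, hT, hle⟩ := exists_subset_ordPairs_le G hS h
    have hrest := ih (S \ T) (sdiff_ssubset hTS hT) fun x y p hp ↦
      h x y p ⟨hp.isPath, fun v hv ↦ (mem_sdiff.mp (hp.mem v hv)).1⟩
    rw [ordPairs_self_eq_of_subset G hTS, ← card_sdiff_add_card_eq_card hTS]
    linarith

end LongPaths

section Cycles

variable {V : Type*} {G : SimpleGraph V} {k : ℕ} {u : V}

/-- Adding `u` to a path between two of its neighbours closes the path to a cycle. -/
lemma contains_cycleGraph_of_isPath {x y : V} (p : G.Walk x y) (hp : p.IsPath)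
    (hlen : p.length ≠ 0) (hu : u ∉ p.support) (hx : G.Adj u x) (hy : G.Adj u y) :
    Contains G (cycleGraph (p.length + 2)) := by
  let c := Walk.cons hx (p.concat hy.symm)
  have hc : c.IsCycle := Walk.isCycle_iff_isPath_tail_and_le_length.mpr
    ⟨by simpa [c] using hp.concat hu hy.symm, by simp [c]; omega⟩
  have hclen : c.length = p.length + 2 := by simp [c]
  obtain ⟨f⟩ := (cycleGraph_isContained_iff (by omega)).mpr ⟨u, c, hc, hclen⟩
  exact ⟨f.toEmbedding, fun _ _ h ↦ f.toHom.map_adj h⟩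

lemma ordPairs_self_le_of_not_contains_cycleGraph {S : Finset V} (hS : ∀ v ∈ S, G.Adj u v)
    (h : ¬Contains G (cycleGraph (k + 3))) : ordPairs G S S ≤ k * #S := by
  refine ordPairs_self_le_of_forall_length_le G S fun x y p hp ↦ ?_
  by_contra! hlt
  have hlen : (p.take (k + 1)).length = k + 1 := by
    rw [Walk.take_length, min_eq_left hlt]
  have hsupp : ∀ v ∈ (p.take (k + 1)).support, v ∈ S := fun v hv ↦
    hp.mem v ((p.isSubwalk_take (k + 1)).support_subset hv)
  have hcycle := contains_cycleGraph_of_isPath (p.take (k + 1)) (hp.isPath.take _) (by omega)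
    (fun hu ↦ G.loopless.irrefl u (hS u (hsupp u hu))) (hS _ (hsupp _ (Walk.start_mem_support _)))
    (hS _ (hsupp _ (Walk.end_mem_support _)))
  rw [hlen] at hcycle
  exact h hcycle

namespace IsCorePair

variable {A B : Finset V}

lemma contains_cycleGraph_even (h : IsCorePair G k A B) (hk : k ≠ 0) (hA : ∀ a ∈ A, G.Adj u a)
    (hAne : A.Nonempty) (huB : u ∉ B) : Contains G (cycleGraph (2 * k + 2)) := by
  obtain ⟨a, ha⟩ := hAne
  have huA : u ∉ A := fun hu ↦ G.loopless.irrefl u (hA u hu)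
  obtain ⟨a', ha', p, hp, hlen, hsupp⟩ := h.exists_isPath_extend k ha .nil .nil
    (by simp [ha, add_comm]) (by simp [disjoint_left.mp h.disjoint ha])
  simp only [Walk.length_nil, zero_add] at hlen
  have hup : u ∉ p.support := fun hu ↦ by
    rcases hsupp u hu with hu | hu | hu
    exacts [(hA a ha).ne (by simpa using hu), huA hu, huB hu]
  exact hlen ▸ contains_cycleGraph_of_isPath p hp (by omega) hup (hA a' ha') (hA a ha)

lemma exists_isPath_support_eq (h : IsCorePair G k A B) (hk : 2 ≤ k) {s v b : V} (hb : b ∈ B)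
    (hbv : b ≠ v) (hsv : G.Adj s v) (hsb : G.Adj s b) :
    ∃ c ∈ A, ∃ p : G.Walk c v, p.IsPath ∧ p.support = [c, b, s, v] := by
  obtain ⟨c, hc, hbc, hcsv⟩ : ∃ c ∈ A, G.Adj b c ∧ c ∉ ({s, v} : Finset V) :=
    exists_adj_notMem_of_card_inter_lt <|
      ((card_le_card inter_subset_right).trans card_le_two).trans_lt <|
        hk.trans_lt (h.lt_degreeIn_left b hb)
  refine ⟨c, hc, .cons hbc.symm (.cons hsb.symm (.cons hsv .nil)), ?_, rfl⟩
  simp only [mem_insert, mem_singleton, not_or] at hcsv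
  simp [Walk.cons_isPath_iff, hsv.ne, hsb.ne', hbv, hbc.ne', hcsv]

/-- The cycle runs from `u` through `v`, `s` and `b` into the core pair and back to `u`. -/
lemma contains_cycleGraph_odd (h : IsCorePair G k A B) (hk : k ≠ 0) (hA : ∀ a ∈ A, G.Adj u a)
    (hB : ∀ b ∈ B, ¬G.Adj u b) (huB : u ∉ B) {s v b : V} (hus : G.Adj u s) (huv : G.Adj u v)
    (hsv : G.Adj s v) (hb : b ∈ B) (hsb : G.Adj s b) :
    Contains G (cycleGraph (2 * k + 1)) := by
  obtain rfl | hk1 := eq_or_ne k 1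
  · exact contains_cycleGraph_of_isPath (.cons hsv .nil) (by simpa using hsv.ne) (by simp)
      (by simp [hus.ne, huv.ne]) hus huv
  have hsB : s ∉ B := fun hs ↦ hB s hs hus
  have hvB : v ∉ B := fun hv ↦ hB v hv huv
  have hbA : b ∉ A := fun hbA ↦ disjoint_left.mp h.disjoint hbA hb
  obtain ⟨c, hc, p, hp, hpsupp⟩ := h.exists_isPath_support_eq (by omega) hb
    (by rintro rfl; exact hvB hb) hsv hsb
  have hplen : p.length = 3 := by simpa [hpsupp] using p.length_support
  have hcB : c ∉ B := disjoint_left.mp h.disjoint hc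
  have hAp : #(A ∩ p.support.toFinset) ≤ 3 :=
    (card_le_card (t := {c, s, v}) (by grind [List.mem_toFinset])).trans card_le_three
  have hBp : #(B ∩ p.support.toFinset) ≤ 1 := by
    rw [← card_singleton b]
    exact card_le_card (by grind [List.mem_toFinset])
  obtain ⟨a, ha, q, hq, hqlen, hsupp⟩ :=
    h.exists_isPath_extend (k - 2) hc p hp (by omega) (by omega)
  have huA : u ∉ A := fun hu ↦ G.loopless.irrefl u (hA u hu)
  have hup : u ∉ p.support := by
    have hub : u ≠ b := by rintro rfl; exact huB hb
    simp [hpsupp, (hA c hc).ne, hub, hus.ne, huv.ne]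
  have huq : u ∉ q.support := fun hu ↦ by
    rcases hsupp u hu with hu | hu | hu
    exacts [hup hu, huA hu, huB hu]
  have hcycle := contains_cycleGraph_of_isPath q hq (by omega) huq (hA a ha) huv
  rwa [show q.length + 2 = 2 * k + 1 by omega] at hcycle

end IsCorePair

end Cycles

section Arithmetic

lemma four_mul_le_sq_of_core_empty {n k a b P Q : ℕ} (hn : 12 * (k + 1) ≤ n) (hab : a + b ≤ n)
    (hP : P ≤ (2 * k + 1) * a) (hQ : Q ≤ (k + 1) * (a + b)) : 4 * (a + P + Q) ≤ n ^ 2 := by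
  calc 4 * (a + P + Q) ≤ 4 * (k + 1) * (3 * a + b) := by linarith
    _ ≤ 4 * (k + 1) * (3 * n) := by gcongr; omega
    _ = 12 * (k + 1) * n := by ring
    _ ≤ n * n := by gcongr
    _ = n ^ 2 := (sq n).symm

/-- The left-hand side is convex in `a`; for `k = n / 14` it is about `46n² / 49` at the end point
`a = 2n / 7` and `41n² / 49` at the end point `a = n`. -/
lemma le_sq_of_two_mul_le_seven_mul {n k a : ℤ} (hk : 0 ≤ k) (hn : 14 * k + 21 ≤ n) (ha : a ≤ n)
    (han : 2 * n ≤ 7 * a) :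
    4 * (a + 2 * k * a + (k + 1) * (a - 2 * k)) + (n - 1 - a + 2 * k) ^ 2 ≤ n ^ 2 := by
  nlinarith [mul_nonneg (sub_nonneg.mpr han) (sub_nonneg.mpr ha),
    mul_nonneg (sub_nonneg.mpr hn) (sub_nonneg.mpr ha), mul_nonneg (sub_nonneg.mpr hn) hk,
    mul_nonneg (sub_nonneg.mpr hn) (sub_nonneg.mpr han)]

/-- For `k = n / 14` and `a = 2n / 7` the left-hand side is about `48n² / 49`. -/
lemma le_sq_of_seven_mul_le_two_mul {n k a : ℤ} (hk : 0 ≤ k) (hn : 14 * k + 21 ≤ n) (ha : 0 ≤ a)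
    (han : 7 * a ≤ 2 * n) : 4 * (a + 2 * k * a + a * (n - 1 - a)) ≤ n ^ 2 := by
  nlinarith [mul_nonneg (sub_nonneg.mpr hn) ha, mul_nonneg (sub_nonneg.mpr han) ha,
    mul_nonneg (sub_nonneg.mpr han) (show 0 ≤ n by linarith)]

/-- With `s` large, `a + P + Q ≤ s (n - s)`. With `s` small, so is `a₀`, which bounds `Q` through
the core, and this settles the case of large `a`. -/
lemma four_mul_le_sq_of_core {n k a b P Q s z d a₀ b₀ : ℕ} (hn : 14 * k + 21 ≤ n)
    (ha : s + z = a) (hb : b₀ + d = b) (hab : a + b + 1 = n) (ha₀ : a₀ ≤ s) (hb₀ : k + 1 ≤ b₀)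
    (hP : P ≤ 2 * k * z) (hQab : Q ≤ a * b) (hQs : Q ≤ s * b + z * d)
    (hQ : Q + (k + 1) * (a₀ + b₀) ≤ a₀ * b₀ + (k + 1) * (a + b)) :
    4 * (a + P + Q) ≤ n ^ 2 := by
  zify at *
  have hk : (0 : ℤ) ≤ k := by positivity
  have hz : (0 : ℤ) ≤ z := by positivity
  rcases le_or_gt (d + 2 * k + 1 : ℤ) s with hlarge | hsmall
  · calc (4 * (a + P + Q) : ℤ) ≤ 4 * (s * (b + 1) + z * (d + 2 * k + 1)) := by linarith
      _ ≤ 4 * (s * (b + 1) + z * s) := by gcongr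
      _ = 4 * s * (n - s) := by rw [← hab, ← ha]; ring
      _ ≤ (s + (n - s)) ^ 2 := four_mul_le_sq_add (s : ℤ) (n - s)
      _ = n ^ 2 := by ring
  have hPa : (P : ℤ) ≤ 2 * k * a := hP.trans (by gcongr; linarith)
  obtain hsa | hla := le_total (7 * a : ℤ) (2 * n)
  · refine le_trans ?_ (le_sq_of_seven_mul_le_two_mul hk hn (by linarith) hsa)
    rw [show (n - 1 - a : ℤ) = b by linarith]
    linarith
  · have ha₀d : (a₀ : ℤ) ≤ d + 2 * k := by linarith
    have hQd : (Q : ℤ) ≤ (d + 2 * k) * b₀ + (k + 1) * (a - 2 * k) := by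
      have := mul_le_mul_of_nonneg_right ha₀d (sub_nonneg.mpr hb₀)
      rw [← hb] at hQ
      linarith
    have hsq : (4 * (d + 2 * k) * b₀ : ℤ) ≤ (n - 1 - a + 2 * k) ^ 2 := by
      rw [show (n - 1 - a + 2 * k : ℤ) = d + 2 * k + b₀ by linarith]
      exact four_mul_le_sq_add _ _
    refine le_trans ?_ (le_sq_of_two_mul_le_seven_mul hk hn (by linarith) hla)
    linarith

end Arithmetic

section Attachment

variable {V : Type*} (G : SimpleGraph V) {A B A₀ B₀ : Finset V}

/-- The vertices of `A` that have a neighbour in `B`. With `B` one side of a core pair, these are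
the vertices from which a path can be led into the core. -/
noncomputable def attachment (A B : Finset V) : Finset V := {v ∈ A | ∃ b ∈ B, G.Adj v b}

variable {G}

lemma mem_attachment {v : V} : v ∈ attachment G A B ↔ v ∈ A ∧ ∃ b ∈ B, G.Adj v b :=
  mem_filter

lemma attachment_subset : attachment G A B ⊆ A := filter_subset _ _

lemma IsCorePair.subset_attachment {k : ℕ} (h : IsCorePair G k A₀ B₀) (hk : k ≠ 0) (hA : A₀ ⊆ A) :
    A₀ ⊆ attachment G A B₀ := fun a ha ↦
  mem_attachment.mpr ⟨hA ha, exists_adj_of_degreeIn_pos <|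
    (Nat.pos_of_ne_zero hk).trans_le (h.le_degreeIn_right a ha)⟩

lemma ordPairs_le_attachment :
    ordPairs G A B ≤
      #(attachment G A B₀) * #B + #(A \ attachment G A B₀) * #(B \ B₀) := by
  conv_lhs => rw [← union_sdiff_of_subset (attachment_subset (G := G) (A := A) (B := B₀)),
    ordPairs_union_left G disjoint_sdiff]
  refine add_le_add (ordPairs_le_card_mul G fun v _ ↦ degreeIn_le_card G v B)
    (ordPairs_le_card_mul G fun v hv ↦ card_le_card fun w hw ↦ ?_)
  simp only [mem_filter, mem_sdiff, mem_attachment, not_and, not_exists] at hv hw ⊢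
  exact ⟨hw.1, fun hw₀ ↦ hv.2 hv.1 w hw₀ hw.2⟩

lemma ordPairs_self_eq_sdiff_attachment
    (h : ∀ s ∈ attachment G A B, ∀ v ∈ A, ¬G.Adj s v) :
    ordPairs G A A = ordPairs G (A \ attachment G A B) (A \ attachment G A B) := by
  have hzero : ∀ T ⊆ A, ordPairs G (attachment G A B) T = 0 := fun T hT ↦
    card_eq_zero.mpr <| filter_eq_empty_iff.mpr fun p hp ↦
      h p.1 (mem_product.mp hp).1 p.2 (hT (mem_product.mp hp).2)
  rw [ordPairs_self_eq_of_subset G attachment_subset, hzero _ attachment_subset,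
    hzero _ sdiff_subset, mul_zero, zero_add, zero_add]

end Attachment

section Neighborhood

variable {V : Type*} [Fintype V] (G : SimpleGraph V) (u : V)

lemma disjoint_neighborFinset_compl : Disjoint (G.neighborFinset u) (Gᶜ.neighborFinset u) :=
  disjoint_left.mpr fun v hv hv' ↦ by simp_all

lemma singleton_union_neighborFinset_union_compl :
    {u} ∪ (G.neighborFinset u ∪ Gᶜ.neighborFinset u) = univ := by
  ext v
  simp only [mem_union, mem_singleton, mem_neighborFinset, compl_adj, mem_univ, iff_true]
  tauto

lemma disjoint_singleton_neighborFinset_union_compl :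
    Disjoint {u} (G.neighborFinset u ∪ Gᶜ.neighborFinset u) := by
  simp

lemma card_neighborFinset_add_card_compl :
    #(G.neighborFinset u) + #(Gᶜ.neighborFinset u) + 1 = Fintype.card V := by
  rw [← card_univ, ← singleton_union_neighborFinset_union_compl G u,
    card_union_of_disjoint (disjoint_singleton_neighborFinset_union_compl G u),
    card_union_of_disjoint (disjoint_neighborFinset_compl G u), card_singleton, add_comm]

lemma sum_degree_neighborFinset :
    ∑ v ∈ G.neighborFinset u, G.degree v = #(G.neighborFinset u) +
      ordPairs G (G.neighborFinset u) (G.neighborFinset u) +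
      ordPairs G (G.neighborFinset u) (Gᶜ.neighborFinset u) := by
  have hdeg : ∀ v ∈ G.neighborFinset u, G.degree v = 1 +
      (degreeIn G v (G.neighborFinset u) + degreeIn G v (Gᶜ.neighborFinset u)) := fun v hv ↦ by
    have huv : degreeIn G v {u} = 1 := by
      simp [degreeIn, filter_singleton, G.adj_comm v u, (G.mem_neighborFinset u v).mp hv]
    rw [← degreeIn_univ, ← singleton_union_neighborFinset_union_compl G u,
      degreeIn_union G v (disjoint_singleton_neighborFinset_union_compl G u),
      degreeIn_union G v (disjoint_neighborFinset_compl G u), huv]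
  rw [sum_congr rfl hdeg, sum_add_distrib, sum_add_distrib, ordPairs_eq_sum_degreeIn,
    ordPairs_eq_sum_degreeIn, card_eq_sum_ones]
  ring

variable {G u}

lemma contains_cycleGraph_even_of_lt {k : ℕ} (hk : 14 * k + 28 ≤ Fintype.card V)
    (hu : Fintype.card V ^ 2 < 4 * ∑ v ∈ G.neighborFinset u, G.degree v) :
    Contains G (cycleGraph (2 * k + 4)) := by
  by_contra hcyc
  obtain ⟨A₀, hA₀, B₀, hB₀, hcore, hQ⟩ :=
    exists_isCorePair G (k + 1) (disjoint_neighborFinset_compl G u)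
  have hempty : A₀ = ∅ := by
    by_contra hne
    exact hcyc <| hcore.contains_cycleGraph_even (u := u) k.succ_ne_zero
      (fun a ha ↦ by simpa using hA₀ ha) (nonempty_iff_ne_empty.mpr hne)
      (fun hu ↦ by simpa using hB₀ hu)
  have hP := ordPairs_self_le_of_not_contains_cycleGraph (k := 2 * k + 1)
    (fun v ↦ (G.mem_neighborFinset u v).mp) hcyc
  have hcard := card_neighborFinset_add_card_compl G u
  rw [sum_degree_neighborFinset] at hu
  exact hu.not_ge <| four_mul_le_sq_of_core_empty (k := k) (by omega) (by omega) hP <|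
    ordPairs_le_of_core_empty (hempty ▸ hQ)

lemma contains_cycleGraph_odd_of_lt {k : ℕ} (hk : 14 * k + 21 ≤ Fintype.card V)
    (hu : Fintype.card V ^ 2 < 4 * ∑ v ∈ G.neighborFinset u, G.degree v) :
    Contains G (cycleGraph (2 * k + 3)) := by
  by_contra hcyc
  have hcard := card_neighborFinset_add_card_compl G u
  rw [sum_degree_neighborFinset] at hu
  set A := G.neighborFinset u with hA
  set B := Gᶜ.neighborFinset u with hB
  obtain ⟨A₀, hA₀, B₀, hB₀, hcore, hQ⟩ :=
    exists_isCorePair G (k + 1) (disjoint_neighborFinset_compl G u)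
  have hPE : ∀ Z ⊆ A, ordPairs G Z Z ≤ 2 * k * #Z := fun Z hZ ↦
    ordPairs_self_le_of_not_contains_cycleGraph (fun v hv ↦ by simpa [hA] using hZ hv) hcyc
  refine hu.not_ge ?_
  obtain rfl | ⟨a, ha⟩ := A₀.eq_empty_or_nonempty
  · exact four_mul_le_sq_of_core_empty (k := k) (by omega) (by omega)
      ((hPE A subset_rfl).trans (by gcongr; omega)) (ordPairs_le_of_core_empty hQ)
  have hP : ordPairs G A A ≤ 2 * k * #(A \ attachment G A B₀) := by
    refine (ordPairs_self_eq_sdiff_attachment fun s hs v hv hsv ↦ hcyc ?_).trans_le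
      (hPE _ sdiff_subset)
    obtain ⟨hs, b, hb, hsb⟩ := mem_attachment.mp hs
    exact hcore.contains_cycleGraph_odd (u := u) k.succ_ne_zero
      (fun a ha ↦ by simpa [hA] using hA₀ ha)
      (fun b hb ↦ (by simpa [hB] using hB₀ hb : _ ∧ _).2)
      (fun hu ↦ by simpa [hB] using hB₀ hu) (by simpa [hA] using hs) (by simpa [hA] using hv)
      hsv hb hsb
  exact four_mul_le_sq_of_core hk
    ((add_comm _ _).trans (card_sdiff_add_card_eq_card attachment_subset))
    ((add_comm _ _).trans (card_sdiff_add_card_eq_card hB₀)) hcard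
    (card_le_card (hcore.subset_attachment k.succ_ne_zero hA₀))
    ((hcore.le_degreeIn_right a ha).trans (degreeIn_le_card G a B₀)) hP
    (ordPairs_le_card_mul G fun v _ ↦ degreeIn_le_card G v B) ordPairs_le_attachment
    (hQ.trans (by gcongr; exact ordPairs_le_card_mul G fun v _ ↦ degreeIn_le_card G v B₀))

theorem stmt5_general {t : ℕ} (ht : 3 ≤ t) (htn : 7 * t ≤ Fintype.card V)
    (hu : Fintype.card V ^ 2 < 4 * ∑ v ∈ G.neighborFinset u, G.degree v) :
    Contains G (cycleGraph t) := by
  obtain ⟨m, rfl | rfl⟩ := t.even_or_odd'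
  · obtain ⟨k, rfl⟩ := Nat.exists_eq_add_of_le' (show 2 ≤ m by omega)
    exact contains_cycleGraph_even_of_lt (by omega) hu
  · obtain ⟨k, rfl⟩ := Nat.exists_eq_add_of_le' (show 1 ≤ m by omega)
    exact contains_cycleGraph_odd_of_lt (by omega) hu

end Neighborhood

/-- Corollary 1.8: a graph on `n` vertices with `ρ(G) > ρ(T_{n,2})` contains a cycle of
every length `t` with `3 ≤ t ≤ n/7`. -/
theorem stmt5 (n : ℕ) (hn : 0 < n) (G : SimpleGraph (Fin n))
    (hρ : adjSpectralRadius (turanGraph n 2) < adjSpectralRadius G) :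
    ∀ t : ℕ, 3 ≤ t → 7 * t ≤ n → Contains G (cycleGraph t) := by
  intro t ht htn
  obtain ⟨u, hu⟩ := exists_sq_lt_four_mul_sum_degree (by omega) hρ
  exact stmt5_general (u := u) ht (by rwa [Fintype.card_fin]) (by rwa [Fintype.card_fin])
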